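/- arXiv:math/0301245 — 2 statements merged into one kernel-verified Lean document; each statement's English description precedes it below -/
import Mathlib

section
/- (Lemma 12) Let t_0 be a rooted tree with N vertices and let c be an integer with |c| ≤ |χ(t_0)|. Then there exists a finite sequence of rooted trees t_1, …, t_k such that χ(t_k) = c, for each i = 1, …, k the tree t_{i−1} is obtained from t_i by contracting an edge, and k ≤ 3 + 3·log₂ N. -/
open SimpleGraph

/-- A rooted tree on vertex set `Fin n`: a connected acyclic simple graph
with a distinguished root vertex. -/
structure RTree (n : ℕ) where
  adj : SimpleGraph (Fin n)
  connected : adj.Connected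
  acyclic : adj.IsAcyclic
  root : Fin n

/-- `v` is a leaf of the rooted tree `t`: a vertex of degree one other than the
root, except that in the one-vertex tree the root counts as a leaf. -/
def IsLeafV {n : ℕ} (t : RTree n) (v : Fin n) : Prop :=
  n = 1 ∨ ((t.adj.neighborSet v).ncard = 1 ∧ v ≠ t.root)

/-- The number of leaves of a rooted tree. -/
noncomputable def numLeaves {n : ℕ} (t : RTree n) : ℕ :=
  Nat.card {v : Fin n // IsLeafV t v}

/-- Root-preserving isomorphism of rooted trees. -/
def treeSetoid (n : ℕ) : Setoid (RTree n) where
  r t t' := ∃ e : t.adj ≃g t'.adj, e t.root = t'.root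
  iseqv := by
    constructor
    · intro t; exact ⟨RelIso.refl _, rfl⟩
    · rintro t t' ⟨e, he⟩
      exact ⟨e.symm, by rw [← he]; exact e.symm_apply_apply t.root⟩
    · rintro a b c ⟨e, he⟩ ⟨f, hf⟩
      exact ⟨e.trans f, by simp [RelIso.trans_apply, he, hf]⟩

/-- `aCount n k` : the number of isomorphism classes of rooted trees with `n`
vertices and exactly `k` leaves. -/
noncomputable def aCount (n k : ℕ) : ℕ :=
  Nat.card (Quotient (Setoid.comap
    (Subtype.val : {t : RTree n // numLeaves t = k} → RTree n)
    (treeSetoid n)))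

/-- `χ(t)`: the number of vertices at odd distance from the root minus the
number of vertices at even distance from the root (the root counts among the
latter). -/
noncomputable def chi {n : ℕ} (t : RTree n) : ℤ :=
  (Nat.card {v : Fin n // Odd (t.adj.dist t.root v)} : ℤ) -
    (Nat.card {v : Fin n // Even (t.adj.dist t.root v)} : ℤ)

/-- `t'` is obtained from `t` by contracting an edge: some edge `{u,w}` of `t`
together with its endpoints is replaced by a single vertex, all other
adjacencies being preserved; the root is preserved by the contraction map. -/
def ContractsTo {n : ℕ} (t : RTree (n + 1)) (t' : RTree n) : Prop :=
  ∃ (u w : Fin (n + 1)) (f : Fin (n + 1) → Fin n),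
    t.adj.Adj u w ∧ f u = f w ∧
    Set.InjOn f {w}ᶜ ∧
    Function.Surjective f ∧
    f t.root = t'.root ∧
    ∀ a b : Fin n, t'.adj.Adj a b ↔
      (a ≠ b ∧ ∃ a' b' : Fin (n + 1), f a' = a ∧ f b' = b ∧ t.adj.Adj a' b')

/-
Colour the vertices of `t₀` with signs by the parity of their depth, so that `χ` is minus the sum
of the signs. Reversing the signs on a set `A` of vertices changes the sum, and spoils properness
only on the edges between `A` and its complement. Let `A` grow one vertex at a time, visiting the
subtree of the heaviest child of a vertex before those of the other children and before the vertex
itself. The edges from a vertex to its children then need covering only after the heavy subtree is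
done, while light subtrees of at most half the size are being visited, so every cut has a vertex
cover of size at most `log₂ N`. The sum of the signs moves by at most `2` at a time from its initial
value to roughly the opposite one, so at some moment it is within `2` of `-c`.

Splitting a vertex `v` into two adjacent vertices of opposite signs, and giving the new one the
neighbours of the same sign as `v`, makes the colouring proper around `v`. Doing this at each vertex
of the cover yields a proper colouring whose sum differs from `-c` by at most `log₂ N + 2`.
Splitting off leaves of the appropriate sign then removes this discrepancy.
-/

section CutCover

variable {V : Type*} {G : SimpleGraph V} {A B : Set V} {v : V} {p q : ℕ}

lemma vertexCoverNum_sup_le (G H : SimpleGraph V) :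
    (G ⊔ H).vertexCoverNum ≤ G.vertexCoverNum + H.vertexCoverNum := by
  obtain ⟨M, hM, hMG⟩ := vertexCoverNum_exists G
  obtain ⟨M', hM', hMH⟩ := vertexCoverNum_exists H
  have hcover : (G ⊔ H).IsVertexCover (M ∪ M') := by
    rintro a b (hab | hab)
    · exact (hMG hab).imp .inl .inl
    · exact (hMH hab).imp .inr .inr
  calc (G ⊔ H).vertexCoverNum ≤ (M ∪ M').encard := hcover.vertexCoverNum_le
    _ ≤ M.encard + M'.encard := Set.encard_union_le M M'
    _ = G.vertexCoverNum + H.vertexCoverNum := by rw [hM, hM']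

/-- The least number of vertices meeting every edge of `G` between `A` and its complement. -/
noncomputable def cutCoverNum (G : SimpleGraph V) (A : Set V) : ℕ∞ :=
  (G.between A Aᶜ).vertexCoverNum

lemma cutCoverNum_empty (G : SimpleGraph V) : cutCoverNum G ∅ = 0 := by
  rw [cutCoverNum, vertexCoverNum_eq_zero]
  ext
  simp [between_adj]

lemma cutCoverNum_union_le (G : SimpleGraph V) (A B : Set V) :
    cutCoverNum G (A ∪ B) ≤ cutCoverNum G A + cutCoverNum G B := by
  refine (SimpleGraph.vertexCoverNum_mono fun a b hab ↦ ?_).trans (vertexCoverNum_sup_le _ _)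
  simp only [sup_adj, between_adj, Set.mem_union, Set.mem_compl_iff] at hab ⊢
  tauto

lemma cutCoverNum_le_one (h : ∀ a ∈ A, ∀ b ∉ A, G.Adj a b → b = v) : cutCoverNum G A ≤ 1 := by
  have hcover : (G.between A Aᶜ).IsVertexCover {v} := by
    rintro a b ⟨hab, ⟨ha, hb⟩ | ⟨ha, hb⟩⟩
    · exact .inr (h a ha b hb hab)
    · exact .inl (h b hb a ha hab.symm)
  simpa [cutCoverNum] using hcover.vertexCoverNum_le

/-- One step of a sweep of `G`: the swept set gains at most one vertex, and the new cut has a vertex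
cover of size at most `p`. A sweep is a chain of such steps. -/
def SweepStep (G : SimpleGraph V) (p : ℕ) (A B : Set V) : Prop :=
  (∃ v, B = insert v A) ∧ cutCoverNum G B ≤ p

lemma SweepStep.mono (hpq : p ≤ q) : SweepStep G p ≤ SweepStep G q :=
  fun _ _ h ↦ ⟨h.1, h.2.trans (mod_cast hpq)⟩

lemma SweepStep.union_left {C : Set V} (hC : cutCoverNum G C ≤ q) (h : SweepStep G p A B) :
    SweepStep G (q + p) (C ∪ A) (C ∪ B) := by
  obtain ⟨⟨v, rfl⟩, hB⟩ := h
  refine ⟨⟨v, Set.union_insert⟩, ?_⟩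
  push_cast
  exact (cutCoverNum_union_le _ _ _).trans (add_le_add hC hB)

lemma subset_of_sweep (h : Relation.ReflTransGen (SweepStep G p) A B) : A ⊆ B := by
  induction h with
  | refl => exact subset_rfl
  | tail _ hstep ih =>
    obtain ⟨⟨v, rfl⟩, -⟩ := hstep
    exact ih.trans (Set.subset_insert _ _)

lemma cutCoverNum_le_of_sweep (h : Relation.ReflTransGen (SweepStep G p) ∅ A) :
    cutCoverNum G A ≤ p := by
  rcases h.cases_tail with rfl | ⟨_, -, hstep⟩
  · simp [cutCoverNum_empty]
  · exact hstep.2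

end CutCover

section Descendants

variable {V : Type*} {G : SimpleGraph V} {r u v w c d : V}

/-- In the graph `G` rooted at `r`, the vertex `u` is a parent of `v`. -/
def IsParent (G : SimpleGraph V) (r u v : V) : Prop :=
  G.Adj u v ∧ G.dist r v = G.dist r u + 1

/-- The vertices of the subtree hanging from `v` in the tree `G` rooted at `r`, including `v`. -/
def descendants (G : SimpleGraph V) (r v : V) : Set V :=
  {w | Relation.ReflTransGen (IsParent G r) v w}

lemma isParent_or_isParent_of_adj (hG : G.IsTree) (r : V) (h : G.Adj u v) :
    IsParent G r u v ∨ IsParent G r v u :=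
  (hG.dist_eq_dist_add_one_of_adj r h).symm.imp (⟨h, ·⟩) (⟨h.symm, ·⟩)

lemma IsParent.unique (hG : G.IsTree) (hu : IsParent G r u w) (hv : IsParent G r v w) : u = v := by
  have path_through : ∀ {x}, IsParent G r x w → ∃ p : G.Walk r w, p.IsPath ∧ p.penultimate = x := by
    intro x hx
    obtain ⟨p, hp⟩ := hG.connected.exists_walk_length_eq_dist r x
    refine ⟨p.concat hx.1, Walk.isPath_of_length_eq_dist _ ?_, p.penultimate_concat hx.1⟩
    rw [Walk.length_concat, hp, hx.2]
  obtain ⟨p, hp, rfl⟩ := path_through hu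
  obtain ⟨q, hq, rfl⟩ := path_through hv
  rw [(hG.existsUnique_path r w).unique hp hq]

lemma mem_descendants_self : v ∈ descendants G r v := .refl

lemma IsParent.descendants_subset (h : IsParent G r v c) :
    descendants G r c ⊆ descendants G r v := fun _ hw ↦ .head h hw

lemma eq_or_dist_lt_of_mem_descendants (h : w ∈ descendants G r v) :
    w = v ∨ G.dist r v < G.dist r w := by
  induction h with
  | refl => exact .inl rfl
  | tail _ hstep ih =>
    have := hstep.2
    rcases ih with rfl | ih <;> omega

lemma IsParent.notMem_descendants (h : IsParent G r v c) : v ∉ descendants G r c := by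
  intro hv
  have := h.2
  rcases eq_or_dist_lt_of_mem_descendants hv with rfl | hlt <;> omega

lemma isParent_of_adj_of_notMem_descendants (hG : G.IsTree) (hu : u ∈ descendants G r v)
    (hw : w ∉ descendants G r v) (hadj : G.Adj u w) : IsParent G r w v := by
  rcases isParent_or_isParent_of_adj hG r hadj with huw | hwu
  · exact (hw (.tail hu huw)).elim
  · obtain rfl | ⟨x, hx, hxu⟩ := Relation.ReflTransGen.cases_tail hu
    · exact hwu
    · exact (hw (hwu.unique hG hxu ▸ hx)).elim

lemma descendants_root (hG : G.IsTree) (r : V) : descendants G r r = Set.univ := by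
  refine Set.eq_univ_of_forall fun w ↦ by_contra fun hw ↦ ?_
  obtain ⟨p⟩ := hG.connected r w
  obtain ⟨e, -, hfst, hsnd⟩ := p.exists_boundary_dart _ mem_descendants_self hw
  have hroot := (isParent_of_adj_of_notMem_descendants hG hfst hsnd e.adj).2
  simp at hroot

lemma descendants_sdiff_singleton (G : SimpleGraph V) (r v : V) :
    descendants G r v \ {v} = ⋃ c ∈ {c | IsParent G r v c}, descendants G r c := by
  ext w
  simp only [Set.mem_sdiff, Set.mem_singleton_iff, Set.mem_iUnion, Set.mem_ofPred, exists_prop]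
  constructor
  · rintro ⟨hw, hwv⟩
    obtain rfl | ⟨c, hc, hcw⟩ := Relation.ReflTransGen.cases_head hw
    · exact (hwv rfl).elim
    · exact ⟨c, hc, hcw⟩
  · rintro ⟨c, hc, hcw⟩
    refine ⟨hc.descendants_subset hcw, ?_⟩
    rintro rfl
    exact hc.notMem_descendants hcw

lemma disjoint_descendants (hG : G.IsTree) (hc : IsParent G r v c) (hd : IsParent G r v d)
    (hcd : c ≠ d) : Disjoint (descendants G r c) (descendants G r d) := by
  have hdist : G.dist r c = G.dist r d := hc.2.trans hd.2.symm
  have unrelated : ∀ {x y}, x ≠ y → G.dist r x = G.dist r y → x ∉ descendants G r y :=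
    fun hxy hdist hx ↦ (eq_or_dist_lt_of_mem_descendants hx).elim hxy hdist.not_gt
  refine Set.disjoint_left.mpr fun w hwc hwd ↦ ?_
  have unique_parent : Relator.RightUnique (Function.swap (IsParent G r)) :=
    fun _ _ _ h h' ↦ h.unique hG h'
  rcases Relation.ReflTransGen.total_of_right_unique unique_parent
    (Relation.reflTransGen_swap.mpr hwc) (Relation.reflTransGen_swap.mpr hwd) with h | h
  · exact unrelated hcd hdist (Relation.reflTransGen_swap.mp h)
  · exact unrelated hcd.symm hdist.symm (Relation.reflTransGen_swap.mp h)

lemma cutCoverNum_iUnion_descendants_le_one (hG : G.IsTree) {s : Set V}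
    (hs : ∀ c ∈ s, IsParent G r v c) : cutCoverNum G (⋃ c ∈ s, descendants G r c) ≤ 1 := by
  refine cutCoverNum_le_one (v := v) fun a ha b hb hab ↦ ?_
  simp only [Set.mem_iUnion, not_exists] at ha hb
  obtain ⟨c, hc, hac⟩ := ha
  exact (isParent_of_adj_of_notMem_descendants hG hac (hb c hc) hab).unique hG (hs c hc)

lemma sweep_union_descendants (hG : G.IsTree) {s : Set V} {p q : ℕ}
    (hs : ∀ d ∈ s, IsParent G r v d) (hc : IsParent G r v c)
    (hq : cutCoverNum G (⋃ d ∈ s, descendants G r d) ≤ q) (hpos : 1 ≤ q + p)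
    (hsweep : Relation.ReflTransGen (SweepStep G p) ∅ (descendants G r c \ {c})) :
    Relation.ReflTransGen (SweepStep G (q + p)) (⋃ d ∈ s, descendants G r d)
      (⋃ d ∈ insert c s, descendants G r d) := by
  set D := ⋃ d ∈ s, descendants G r d
  have before_c : Relation.ReflTransGen (SweepStep G (q + p)) D (D ∪ descendants G r c \ {c}) := by
    simpa [Function.onFun] using hsweep.lift (D ∪ ·) fun _ _ h ↦ h.union_left hq
  refine before_c.tail ⟨⟨c, ?_⟩, ?_⟩
  · rw [Set.biUnion_insert, ← Set.union_insert, Set.insert_sdiff_singleton,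
      Set.insert_eq_of_mem mem_descendants_self, Set.union_comm]
  · refine (cutCoverNum_iUnion_descendants_le_one hG (v := v) ?_).trans (mod_cast hpos)
    exact Set.forall_mem_insert.mpr ⟨hc, hs⟩

variable [Finite V]

lemma IsParent.ncard_descendants_lt (h : IsParent G r v c) :
    (descendants G r c).ncard < (descendants G r v).ncard :=
  Set.ncard_lt_ncard ⟨h.descendants_subset,
    fun hsub ↦ h.notMem_descendants (hsub mem_descendants_self)⟩

lemma two_mul_ncard_descendants_le (hG : G.IsTree) (hc : IsParent G r v c) (hd : IsParent G r v d)
    (hcd : c ≠ d) (hle : (descendants G r c).ncard ≤ (descendants G r d).ncard) :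
    2 * (descendants G r c).ncard ≤ (descendants G r v).ncard := by
  calc 2 * (descendants G r c).ncard
      ≤ (descendants G r c).ncard + (descendants G r d).ncard := by omega
    _ = (descendants G r c ∪ descendants G r d).ncard :=
        (Set.ncard_union_eq (disjoint_descendants hG hc hd hcd)).symm
    _ ≤ (descendants G r v).ncard :=
        Set.ncard_le_ncard (Set.union_subset hc.descendants_subset hd.descendants_subset)

lemma sweep_iUnion_descendants_insert (hG : G.IsTree) {m : V} (hm : IsParent G r v m)
    (hmax : ∀ c, IsParent G r v c → (descendants G r c).ncard ≤ (descendants G r m).ncard)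
    (hsweep : ∀ c, IsParent G r v c → Relation.ReflTransGen
      (SweepStep G (Nat.log 2 (descendants G r c).ncard)) ∅ (descendants G r c \ {c}))
    {s : Set V} (hs : ∀ c ∈ s, IsParent G r v c) :
    Relation.ReflTransGen (SweepStep G (Nat.log 2 (descendants G r v).ncard)) ∅
      (⋃ c ∈ insert m s, descendants G r c) := by
  have ncard_pos (c : V) : 0 < (descendants G r c).ncard :=
    (Set.ncard_pos).mpr ⟨c, mem_descendants_self⟩
  induction s, s.toFinite using Set.Finite.induction_on with
  | empty =>
    have log_pos : 1 ≤ Nat.log 2 (descendants G r v).ncard :=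
      Nat.log_pos one_lt_two (by have := ncard_pos m; have := hm.ncard_descendants_lt; omega)
    have sweep_m := Relation.ReflTransGen.mono
      (SweepStep.mono (Nat.log_mono_right hm.ncard_descendants_lt.le)) _ _ (hsweep m hm)
    simpa using sweep_union_descendants hG (s := ∅) (q := 0) (by simp) hm
      (by simp [cutCoverNum_empty]) (by simpa using log_pos) sweep_m
  | @insert c s _ _ ih =>
    obtain ⟨hc, hs⟩ := Set.forall_mem_insert.mp hs
    obtain rfl | hcm := eq_or_ne c m
    · simpa using ih hs
    have log_succ_le : 1 + Nat.log 2 (descendants G r c).ncard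
        ≤ Nat.log 2 (descendants G r v).ncard := by
      rw [add_comm, ← Nat.log_mul_base one_lt_two (ncard_pos c).ne', mul_comm]
      exact Nat.log_mono_right (two_mul_ncard_descendants_le hG hc hm hcm (hmax c hc))
    have hs_m : ∀ d ∈ insert m s, IsParent G r v d := Set.forall_mem_insert.mpr ⟨hm, hs⟩
    have sweep_c := sweep_union_descendants hG hs_m hc
      (mod_cast cutCoverNum_iUnion_descendants_le_one hG hs_m) (by omega) (hsweep c hc)
    rw [Set.insert_comm]
    exact (ih hs).trans (Relation.ReflTransGen.mono (SweepStep.mono log_succ_le) _ _ sweep_c)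

lemma sweep_descendants (hG : G.IsTree) (r v : V) :
    Relation.ReflTransGen (SweepStep G (Nat.log 2 (descendants G r v).ncard)) ∅
      (descendants G r v \ {v}) := by
  induction hn : (descendants G r v).ncard using Nat.strong_induction_on generalizing v with
  | _ n ih =>
    subst hn
    have hsweep (c : V) (hc : IsParent G r v c) := ih _ hc.ncard_descendants_lt c rfl
    rw [descendants_sdiff_singleton]
    obtain hempty | hne := {c | IsParent G r v c}.eq_empty_or_nonempty
    · simpa [hempty] using .refl
    · obtain ⟨m, hm, hmax⟩ := Set.exists_max_image _ (fun c ↦ (descendants G r c).ncard)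
        (Set.toFinite _) hne
      simpa only [Set.insert_eq_of_mem hm] using
        sweep_iUnion_descendants_insert hG hm hmax hsweep (s := {c | IsParent G r v c})
          fun _ hc ↦ hc

end Descendants

lemma exists_abs_sub_le_of_reflTransGen {α β : Type*} [AddCommGroup β] [LinearOrder β]
    [IsOrderedAddMonoid β] {r : α → α → Prop} {g : α → β} {d z : β} {a b : α}
    (h : Relation.ReflTransGen r a b) (hd : 0 ≤ d) (hg : ∀ x y, r x y → |g y - g x| ≤ d)
    (hz : z ∈ Set.uIcc (g a) (g b)) :
    ∃ x, Relation.ReflTransGen r a x ∧ Relation.ReflTransGen r x b ∧ |g x - z| ≤ d := by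
  induction h with
  | refl => exact ⟨a, .refl, .refl, by simp_all⟩
  | @tail x y hax hxy ih =>
    rcases Set.uIcc_subset_uIcc_union_uIcc (b := g x) hz with hz | hz
    · obtain ⟨w, haw, hwx, hw⟩ := ih hz
      exact ⟨w, haw, hwx.tail hxy, hw⟩
    · refine ⟨x, hax, .single hxy, ?_⟩
      rw [abs_sub_comm]
      exact (Set.abs_sub_left_of_mem_uIcc hz).trans (hg x y hxy)

section Signs

variable {V : Type*} {G : SimpleGraph V}

/-- The subgraph of `G` of the edges on which the colouring `σ` is not proper. -/
def monochromatic {α : Type*} (G : SimpleGraph V) (σ : V → α) : SimpleGraph V where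
  Adj a b := G.Adj a b ∧ σ a = σ b
  symm := ⟨fun _ _ h ↦ ⟨h.1.symm, h.2.symm⟩⟩
  loopless := ⟨fun _ h ↦ h.1.ne rfl⟩

open Classical in
/-- The colouring `σ` with the signs of all vertices of `A` reversed. -/
noncomputable def flipOn (A : Set V) (σ : V → ℤˣ) : V → ℤˣ :=
  A.piecewise (-σ) σ

lemma monochromatic_flipOn (s : G.Coloring ℤˣ) (A : Set V) :
    monochromatic G (flipOn A s) = G.between A Aᶜ := by
  ext a b
  have valid (hab : G.Adj a b) : s a = -s b := Int.units_ne_iff_eq_neg.mp (s.valid hab)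
  by_cases ha : a ∈ A <;> by_cases hb : b ∈ A <;>
    simp +contextual [monochromatic, flipOn, between_adj, ha, hb, valid, neg_eq_iff_eq_neg]

lemma abs_sum_le_card (σ : V → ℤˣ) (M : Finset V) :
    |∑ v ∈ M, (σ v : ℤ)| ≤ M.card := by
  refine (Finset.abs_sum_le_sum_abs _ _).trans_eq ?_
  simp [Int.isUnit_iff_abs_eq.mp (Units.isUnit _)]

variable [Fintype V]

lemma exists_abs_mul_eq {σ : V → ℤˣ} {r : V} (hr : σ r = 1) {d : ℤ}
    (hd : d < 0 → ∑ v, (σ v : ℤ) < Fintype.card V) : ∃ u, |d| * σ u = d := by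
  obtain hneg | hnonneg := lt_or_ge d 0
  · obtain ⟨u, hu⟩ : ∃ u, σ u ≠ 1 := by
      by_contra! hall
      simpa [hall] using hd hneg
    exact ⟨u, by simp [(Int.units_eq_one_or (σ u)).resolve_left hu, abs_of_neg hneg]⟩
  · exact ⟨r, by simp [hr, abs_of_nonneg hnonneg]⟩

lemma abs_sum_flipOn_insert_sub_le (σ : V → ℤˣ) (A : Set V) (v : V) :
    |∑ w, (flipOn (insert v A) σ w : ℤ) - ∑ w, (flipOn A σ w : ℤ)| ≤ 2 := by
  classical
  have hzero (w : V) (hw : w ≠ v) : (flipOn (insert v A) σ w : ℤ) - flipOn A σ w = 0 := by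
    simp [flipOn, Set.piecewise, hw]
  rw [← Finset.sum_sub_distrib, Fintype.sum_eq_single v hzero]
  refine (abs_sub _ _).trans_eq ?_
  simp [Int.isUnit_iff_abs_eq.mp (Units.isUnit _)]

lemma sum_flipOn_compl_singleton (σ : V → ℤˣ) (r : V) :
    ∑ w, (flipOn {r}ᶜ σ w : ℤ) = 2 * σ r - ∑ w, (σ w : ℤ) := by
  classical
  have hzero (w : V) (hw : w ≠ r) : (flipOn {r}ᶜ σ w : ℤ) + σ w = 0 := by
    simp [flipOn, hw]
  rw [eq_sub_iff_add_eq, ← Finset.sum_add_distrib, Fintype.sum_eq_single r hzero]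
  simp [flipOn, two_mul]

lemma exists_abs_sum_flipOn_sub_le (hG : G.IsTree) (σ : V → ℤˣ) (r : V) {z : ℤ}
    (hz : |z| ≤ |∑ v, (σ v : ℤ)|) :
    ∃ A : Set V, r ∉ A ∧ cutCoverNum G A ≤ Nat.log 2 (Nat.card V) ∧
      |∑ v, (flipOn A σ v : ℤ) - z| ≤ 2 := by
  have sweep := sweep_descendants hG r r
  rw [descendants_root hG, Set.ncard_univ, ← Set.compl_eq_univ_sdiff] at sweep
  have sum_step (A B : Set V) : SweepStep G (Nat.log 2 (Nat.card V)) A B →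
      |∑ v, (flipOn B σ v : ℤ) - ∑ v, (flipOn A σ v : ℤ)| ≤ 2 := by
    rintro ⟨⟨v, rfl⟩, -⟩
    exact abs_sum_flipOn_insert_sub_le σ A v
  have sum_empty : ∑ v, (flipOn ∅ σ v : ℤ) = ∑ v, (σ v : ℤ) := by simp [flipOn]
  have sum_compl := sum_flipOn_compl_singleton σ r
  by_cases hz' : z ∈ Set.uIcc (∑ v, (flipOn ∅ σ v : ℤ)) (∑ v, (flipOn {r}ᶜ σ v : ℤ))
  · obtain ⟨A, hA, hAr, hAz⟩ := exists_abs_sub_le_of_reflTransGen sweep zero_le_two sum_step hz'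
    exact ⟨A, fun h ↦ subset_of_sweep hAr h rfl, cutCoverNum_le_of_sweep hA, hAz⟩
  · refine ⟨{r}ᶜ, by simp, cutCoverNum_le_of_sweep sweep, ?_⟩
    rw [sum_empty, sum_compl, Set.mem_uIcc] at hz'
    rw [sum_compl, abs_le]
    have hr : (σ r : ℤ) = 1 ∨ (σ r : ℤ) = -1 := Int.isUnit_iff.mp (σ r).isUnit
    rw [abs_le] at hz
    rcases abs_cases (∑ v, (σ v : ℤ)) with h | h <;> omega

end Signs

section Split

variable {V : Type*} {G : SimpleGraph V} {v : V} {S : Set V}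

open Classical in
/-- The endpoint `a` of the edge `ab` after splitting `v` along `S`: it is moved to the new vertex
`none` when `a = v` and `b ∈ S`. -/
noncomputable def splitEnd (v : V) (S : Set V) (a b : V) : Option V :=
  if a = v ∧ b ∈ S then none else some a

lemma splitEnd_getD (v : V) (S : Set V) (a b : V) : (splitEnd v S a b).getD v = a := by
  unfold splitEnd
  split_ifs with h
  exacts [h.1.symm, rfl]

/-- The graph obtained from `G` by splitting `v`: a new vertex `none` is joined to `v` and takes
over the edges from `v` to `S`. -/
def splitGraph (G : SimpleGraph V) (v : V) (S : Set V) : SimpleGraph (Option V) where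
  Adj x y := s(x, y) = s(none, some v) ∨
    ∃ a b, G.Adj a b ∧ splitEnd v S a b = x ∧ splitEnd v S b a = y
  symm := ⟨fun _ _ ↦ Or.imp Sym2.eq_swap.trans
    fun ⟨a, b, hab, ha, hb⟩ ↦ ⟨b, a, hab.symm, hb, ha⟩⟩
  loopless := by
    refine ⟨fun x ↦ ?_⟩
    rintro (h | ⟨a, b, hab, rfl, h⟩)
    · rcases Sym2.eq_iff.mp h with ⟨rfl, h⟩ | ⟨rfl, h⟩ <;> cases h
    · exact hab.ne (by rw [← splitEnd_getD v S a b, ← h, splitEnd_getD])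

lemma splitGraph_adj_none_some : (splitGraph G v S).Adj none (some v) := .inl rfl

lemma adj_iff_exists_splitGraph_adj {a b : V} : G.Adj a b ↔
    a ≠ b ∧ ∃ x y, x.getD v = a ∧ y.getD v = b ∧ (splitGraph G v S).Adj x y := by
  constructor
  · exact fun hab ↦ ⟨hab.ne, _, _, splitEnd_getD v S a b, splitEnd_getD v S b a,
      .inr ⟨a, b, hab, rfl, rfl⟩⟩
  · rintro ⟨hne, x, y, rfl, rfl, h | ⟨a, b, hab, rfl, rfl⟩⟩
    · rcases Sym2.eq_iff.mp h with ⟨rfl, rfl⟩ | ⟨rfl, rfl⟩ <;> exact (hne rfl).elim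
    · rwa [splitEnd_getD, splitEnd_getD]

lemma connected_splitGraph (hG : G.Connected) (v : V) (S : Set V) :
    (splitGraph G v S).Connected := by
  have reachable_end (a b : V) : (splitGraph G v S).Reachable (some a) (splitEnd v S a b) := by
    unfold splitEnd
    split_ifs with h
    · exact h.1 ▸ splitGraph_adj_none_some.symm.reachable
    · rfl
  have reachable_of_adj {a b : V} (hab : G.Adj a b) :
      (splitGraph G v S).Reachable (some a) (some b) := by
    have hends : (splitGraph G v S).Adj (splitEnd v S a b) (splitEnd v S b a) :=
      .inr ⟨a, b, hab, rfl, rfl⟩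
    exact (reachable_end a b).trans (hends.reachable.trans (reachable_end b a).symm)
  refine (connected_iff_exists_forall_reachable _).mpr ⟨some v, ?_⟩
  rintro (_ | w)
  · exact splitGraph_adj_none_some.symm.reachable
  · induction (reachable_iff_reflTransGen v w).mp (hG v w) with
    | refl => rfl
    | tail _ hab ih => exact ih.trans (reachable_of_adj hab)

lemma ncard_edgeSet_splitGraph_le [Finite V] (G : SimpleGraph V) (v : V) (S : Set V) :
    (splitGraph G v S).edgeSet.ncard ≤ G.edgeSet.ncard + 1 := by
  let moved : Sym2 V → Sym2 (Option V) :=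
    Sym2.lift ⟨fun a b ↦ s(splitEnd v S a b, splitEnd v S b a), fun _ _ ↦ Sym2.eq_swap⟩
  have hsub : (splitGraph G v S).edgeSet ⊆ insert s(none, some v) (moved '' G.edgeSet) := by
    rintro ⟨x, y⟩ (h | ⟨a, b, hab, rfl, rfl⟩)
    · exact .inl h
    · exact .inr ⟨s(a, b), hab, rfl⟩
  calc (splitGraph G v S).edgeSet.ncard
      ≤ (insert s(none, some v) (moved '' G.edgeSet)).ncard := Set.ncard_le_ncard hsub
    _ ≤ (moved '' G.edgeSet).ncard + 1 := Set.ncard_insert_le _ _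
    _ ≤ G.edgeSet.ncard + 1 := by grw [Set.ncard_image_le (Set.toFinite _)]

lemma isTree_splitGraph [Finite V] (hG : G.IsTree) (v : V) (S : Set V) :
    (splitGraph G v S).IsTree := by
  have hconn := connected_splitGraph hG.connected v S
  have hcard := (isTree_iff_connected_and_card.mp hG).2
  have hle := ncard_edgeSet_splitGraph_le G v S
  have hge := hconn.card_vert_le_card_edgeSet_add_one
  refine isTree_iff_connected_and_card.mpr ⟨hconn, ?_⟩
  rw [Finite.card_option] at hge ⊢
  rw [← Nat.card_coe_set_eq, ← Nat.card_coe_set_eq] at hle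
  omega

/-- The colouring `σ` extended to the new vertex created by splitting `v`, which gets the sign
opposite to that of `v`. -/
def splitSign (v : V) (σ : V → ℤˣ) (x : Option V) : ℤˣ :=
  x.elim (-σ v) σ

lemma sum_splitSign [Fintype V] (v : V) (σ : V → ℤˣ) :
    ∑ x, (splitSign v σ x : ℤ) = ∑ w, (σ w : ℤ) - σ v := by
  simp [splitSign, Fintype.sum_option, neg_add_eq_sub]

lemma ne_of_splitSign_splitEnd_eq {σ : V → ℤˣ} {a b : V} (hab : a ≠ b)
    (h : splitSign v σ (splitEnd v {b | σ b = σ v} a b) =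
      splitSign v σ (splitEnd v {b | σ b = σ v} b a)) : a ≠ v := by
  rintro rfl
  by_cases hσ : σ b = σ a
  · simp [splitEnd, splitSign, hab.symm, hσ, neg_units_ne_self] at h
  · simp [splitEnd, splitSign, hab.symm, hσ, Ne.symm hσ] at h

lemma isVertexCover_monochromatic_splitGraph {σ : V → ℤˣ} {M : Set V}
    (hM : (monochromatic G σ).IsVertexCover (insert v M)) :
    (monochromatic (splitGraph G v {b | σ b = σ v}) (splitSign v σ)).IsVertexCover (some '' M) := by
  rintro x y ⟨h | ⟨a, b, hab, rfl, rfl⟩, hxy⟩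
  · rcases Sym2.eq_iff.mp h with ⟨rfl, rfl⟩ | ⟨rfl, rfl⟩ <;>
      simp [splitSign, neg_units_ne_self, units_ne_neg_self] at hxy
  · have ha : a ≠ v := ne_of_splitSign_splitEnd_eq hab.ne hxy
    have hb : b ≠ v := ne_of_splitSign_splitEnd_eq hab.ne' hxy.symm
    simp only [splitEnd, ha, hb, false_and, if_false] at hxy ⊢
    simpa [ha, hb] using hM ⟨hab, hxy⟩

end Split

section Chi

variable {n : ℕ} {t : RTree n}

lemma RTree.isTree (t : RTree n) : t.adj.IsTree := ⟨t.connected, t.acyclic⟩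

lemma coloring_eq_neg_one_pow_mul {V : Type*} {G : SimpleGraph V} (s : G.Coloring ℤˣ) {u v : V}
    (p : G.Walk u v) : s v = (-1) ^ p.length * s u := by
  induction p with
  | nil => simp
  | cons h _ ih =>
    rw [ih, Int.units_ne_iff_eq_neg.mp (s.valid h.symm), Walk.length_cons, pow_succ]
    simp

lemma exists_coloring_root_eq_one (t : RTree n) : ∃ s : t.adj.Coloring ℤˣ, s t.root = 1 := by
  refine ⟨Coloring.mk (fun v ↦ (-1) ^ t.adj.dist t.root v) fun {a b} hab ↦ ?_,
    by simp [Coloring.mk]⟩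
  rcases isParent_or_isParent_of_adj t.isTree t.root hab with h | h <;>
    simp [h.2, pow_succ, neg_units_ne_self, units_ne_neg_self]

lemma chi_eq_neg_sum (s : t.adj.Coloring ℤˣ) (hs : s t.root = 1) : chi t = -∑ v, (s v : ℤ) := by
  have s_eq (v : Fin n) : (s v : ℤ) = if Even (t.adj.dist t.root v) then 1 else -1 := by
    obtain ⟨p, hp⟩ := t.connected.exists_walk_length_eq_dist t.root v
    rw [coloring_eq_neg_one_pow_mul s p, hp, hs]
    split_ifs with h <;> simp_all [Odd.neg_one_pow]
  simp [s_eq, Finset.sum_ite, chi, Fintype.card_subtype, sub_eq_add_neg]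

lemma exists_signs_abs_sum_add_le (t : RTree n) {c : ℤ} (hc : |c| ≤ |chi t|) :
    ∃ (σ : Fin n → ℤˣ) (M : Finset (Fin n)), σ t.root = 1 ∧
      (monochromatic t.adj σ).IsVertexCover M ∧ M.card ≤ Nat.log 2 n ∧
      |∑ v, (σ v : ℤ) + c| ≤ 2 := by
  obtain ⟨s, hs⟩ := exists_coloring_root_eq_one t
  obtain ⟨A, hroot, hcut, hsum⟩ := exists_abs_sum_flipOn_sub_le t.isTree s t.root (z := -c)
    (by rwa [abs_neg, ← abs_neg (∑ v, _), ← chi_eq_neg_sum s hs])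
  obtain ⟨M, hcard, hM⟩ := vertexCoverNum_exists (t.adj.between A Aᶜ)
  refine ⟨flipOn A s, M.toFinite.toFinset, by simpa [flipOn, hroot], ?_, ?_, by simpa using hsum⟩
  · rwa [monochromatic_flipOn, Set.Finite.coe_toFinset]
  · rw [cutCoverNum, ← hcard, Nat.card_fin, M.toFinite.encard_eq_coe_toFinset_card] at hcut
    exact_mod_cast hcut

lemma abs_chi_le (t : RTree n) : |chi t| ≤ n := by
  obtain ⟨s, hs⟩ := exists_coloring_root_eq_one t
  rw [chi_eq_neg_sum s hs, abs_neg]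
  simpa using abs_sum_le_card s Finset.univ

end Chi

section Expansion

variable {N n k : ℕ}

/-- The rooted tree obtained from `t` by splitting `v` along `S`. The new vertex is `Fin.last n`. -/
noncomputable def RTree.split (t : RTree n) (v : Fin n) (S : Set (Fin n)) : RTree (n + 1) :=
  have hG : ((splitGraph t.adj v S).comap finSuccEquivLast).IsTree :=
    (Iso.comap finSuccEquivLast _).isTree_iff.mpr (isTree_splitGraph t.isTree v S)
  { adj := (splitGraph t.adj v S).comap finSuccEquivLast
    connected := hG.connected
    acyclic := hG.isAcyclic
    root := t.root.castSucc }

lemma contractsTo_split (t : RTree n) (v : Fin n) (S : Set (Fin n)) :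
    ContractsTo (t.split v S) t := by
  refine ⟨v.castSucc, Fin.last n, fun x ↦ (finSuccEquivLast x).getD v, ?_, by simp, ?_,
    fun a ↦ ⟨a.castSucc, by simp⟩, by simp [RTree.split], fun a b ↦ ?_⟩
  · simpa [RTree.split] using splitGraph_adj_none_some.symm
  · intro x hx y hy hxy
    induction x using Fin.lastCases <;> induction y using Fin.lastCases <;> simp_all
  · simp only [adj_iff_exists_splitGraph_adj (v := v) (S := S), finSuccEquivLast.exists_congr_left,
      Equiv.apply_symm_apply, RTree.split, comap_adj]

/-- The tree `t` arises from `t₀` by `k` successive inverse edge contractions. -/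
inductive IsExpansion (t₀ : RTree N) : ∀ k, RTree (N + k) → Prop
  | refl : IsExpansion t₀ 0 t₀
  | step {k : ℕ} {t : RTree (N + k)} {t' : RTree (N + (k + 1))} :
      IsExpansion t₀ k t → ContractsTo t' t → IsExpansion t₀ (k + 1) t'

lemma IsExpansion.exists_sequence {t₀ : RTree N} {t : RTree (N + k)} (h : IsExpansion t₀ k t) :
    ∃ T : ∀ i, RTree (N + i), T 0 = t₀ ∧ T k = t ∧ ∀ i < k, ContractsTo (T (i + 1)) (T i) := by
  induction h with
  | refl => exact ⟨Nat.rec t₀ fun _ t ↦ t.split t.root ∅, rfl, rfl, by simp⟩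
  | @step k t t' _ ht' ih =>
    obtain ⟨T, hT₀, rfl, hT⟩ := ih
    refine ⟨Function.update T (k + 1) t', by simpa using hT₀, by simp, fun i hi ↦ ?_⟩
    obtain rfl | hik := Nat.eq_or_lt_of_le (Nat.le_of_lt_succ hi)
    · simpa using ht'
    · rw [Function.update_of_ne (by omega), Function.update_of_ne (by omega)]
      exact hT i hik

lemma isVertexCover_monochromatic_split {t : RTree n} {v : Fin n} {σ : Fin n → ℤˣ}
    {M : Set (Fin n)} (hM : (monochromatic t.adj σ).IsVertexCover (insert v M)) :
    (monochromatic (t.split v {b | σ b = σ v}).adj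
      (splitSign v σ ∘ finSuccEquivLast)).IsVertexCover (Fin.castSucc '' M) := by
  have mem_of_mem {a : Fin (n + 1)} (ha : finSuccEquivLast a ∈ some '' M) :
      a ∈ Fin.castSucc '' M := by
    obtain ⟨w, hw, hwa⟩ := ha
    exact ⟨w, hw, finSuccEquivLast.injective (by rw [finSuccEquivLast_castSucc, hwa])⟩
  intro a b hab
  exact (isVertexCover_monochromatic_splitGraph hM hab).imp mem_of_mem mem_of_mem

lemma sum_splitSign_comp_finSuccEquivLast (v : Fin n) (σ : Fin n → ℤˣ) :
    ∑ x, ((splitSign v σ ∘ finSuccEquivLast) x : ℤ) = ∑ w, (σ w : ℤ) - σ v := by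
  rw [← sum_splitSign]
  exact finSuccEquivLast.sum_comp fun x ↦ (splitSign v σ x : ℤ)

lemma IsExpansion.exists_coloring {t₀ : RTree N} {t : RTree (N + k)} (h : IsExpansion t₀ k t)
    {σ : Fin (N + k) → ℤˣ} (hσ : σ t.root = 1) {m : ℕ} {l : List (Fin (N + k))}
    (hm : l.length = m) (hl : (monochromatic t.adj σ).IsVertexCover {v | v ∈ l}) :
    ∃ t', IsExpansion t₀ (k + m) t' ∧ ∃ s : t'.adj.Coloring ℤˣ,
      s t'.root = 1 ∧ ∑ v, (s v : ℤ) = ∑ v, (σ v : ℤ) - (l.map fun v ↦ (σ v : ℤ)).sum := by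
  induction m generalizing k with
  | zero =>
    obtain rfl := List.eq_nil_of_length_eq_zero hm
    have valid {a b : Fin (N + k)} (hab : t.adj.Adj a b) : σ a ≠ σ b := fun heq ↦ by
      simpa using hl ⟨hab, heq⟩
    exact ⟨t, h, Coloring.mk σ valid, hσ, by simp [Coloring.mk]⟩
  | succ m ih =>
    obtain ⟨v, l, rfl⟩ := List.exists_cons_of_length_eq_add_one hm
    have hl' : (monochromatic (t.split v {b | σ b = σ v}).adj (splitSign v σ ∘ finSuccEquivLast))
        |>.IsVertexCover {w | w ∈ l.map Fin.castSucc} := by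
      simpa [Set.image] using isVertexCover_monochromatic_split (M := {w | w ∈ l})
        (by simpa [Set.insert_def] using hl)
    obtain ⟨t', ht', s, hs, hsum⟩ := ih (h.step (contractsTo_split t v _))
      (by simpa [RTree.split, splitSign] using hσ) (by simpa using hm) hl'
    have hassoc : k + (m + 1) = k + 1 + m := by omega
    rw [hassoc]
    refine ⟨t', ht', s, hs, hsum.trans ?_⟩
    refine (congrArg (· - _) (sum_splitSign_comp_finSuccEquivLast v σ)).trans ?_
    simp [splitSign, Function.comp_def, sub_sub]

lemma IsExpansion.exists_chi_eq {t₀ : RTree N} {t : RTree (N + k)} (h : IsExpansion t₀ k t)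
    (s : t.adj.Coloring ℤˣ) (hs : s t.root = 1) {c : ℤ} (hc : -N ≤ c) :
    ∃ t', IsExpansion t₀ (k + (∑ v, (s v : ℤ) + c).natAbs) t' ∧ chi t' = c := by
  set d := ∑ v, (s v : ℤ) + c
  obtain ⟨u, hu⟩ := exists_abs_mul_eq hs (d := d)
    fun hneg ↦ by simp only [Fintype.card_fin]; push_cast; omega
  -- Splitting a vertex where the colouring is proper attaches a leaf of the opposite sign.
  have hcover : (monochromatic t.adj s).IsVertexCover {v | v ∈ List.replicate d.natAbs u} :=
    fun _ _ hab ↦ (s.valid hab.1 hab.2).elim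
  obtain ⟨t', ht', τ, hτ, hsum⟩ := h.exists_coloring hs List.length_replicate hcover
  refine ⟨t', ht', ?_⟩
  rw [chi_eq_neg_sum τ hτ, hsum]
  simp only [List.map_replicate, List.sum_replicate, nsmul_eq_mul, Int.natCast_natAbs, hu]
  omega

end Expansion

theorem lemma12_general (N : ℕ) (t₀ : RTree N) (c : ℤ) (hc : |c| ≤ |chi t₀|) :
    ∃ (k : ℕ) (t : (i : ℕ) → RTree (N + i)),
      t 0 = t₀ ∧ chi (t k) = c ∧
      (∀ i : ℕ, i < k → ContractsTo (t (i + 1)) (t i)) ∧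
      k ≤ 2 + 2 * Nat.log 2 N := by
  obtain ⟨σ, M, hσ, hM, hcard, hnear⟩ := exists_signs_abs_sum_add_le t₀ hc
  obtain ⟨t₁, ht₁, s, hs, hsum⟩ := IsExpansion.refl.exists_coloring hσ M.length_toList
    (by simpa using hM)
  obtain ⟨t₂, ht₂, hchi⟩ := ht₁.exists_chi_eq s hs (neg_le_of_abs_le (hc.trans (abs_chi_le t₀)))
  obtain ⟨T, hT₀, rfl, hT⟩ := ht₂.exists_sequence
  refine ⟨_, T, hT₀, hchi, hT, ?_⟩
  have hM_sum := abs_sum_le_card σ M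
  have hs_sum : ∑ v, (s v : ℤ) = ∑ v, (σ v : ℤ) - ∑ v ∈ M, (σ v : ℤ) :=
    hsum.trans (congrArg _ (Finset.sum_map_toList M _))
  have hdiscrepancy : |∑ v, (s v : ℤ) + c| ≤ M.card + 2 := by
    rw [hs_sum]
    rw [abs_le] at hM_sum hnear ⊢
    omega
  rw [Int.abs_eq_natAbs] at hdiscrepancy
  omega

/-- Lemma 12: given a rooted tree `t₀` with `N` vertices and an integer `c`
with `|c| ≤ |χ(t₀)|`, there is a sequence `t₁, …, t_k` of rooted trees with
`χ(t_k) = c`, each `t_{i−1}` obtained from `t_i` by contracting an edge, and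
`k ≤ 3 + 3·log₂ N`. -/
theorem lemma12 (N : ℕ) (t₀ : RTree N) (c : ℤ) (hc : |c| ≤ |chi t₀|) :
    ∃ (k : ℕ) (t : (i : ℕ) → RTree (N + i)),
      t 0 = t₀ ∧ chi (t k) = c ∧
      (∀ i : ℕ, i < k → ContractsTo (t (i + 1)) (t i)) ∧
      (k : ℝ) ≤ 3 + 3 * Real.logb 2 (N : ℝ) := by
  obtain ⟨k, t, ht₀, hchi, ht, hk⟩ := lemma12_general N t₀ c hc
  have hlog : (Nat.log 2 N : ℝ) ≤ Real.logb 2 N := Real.natLog_le_logb N 2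
  have hk' : (k : ℝ) ≤ 2 + 2 * Nat.log 2 N := mod_cast hk
  exact ⟨k, t, ht₀, hchi, ht, by linarith [(Nat.log 2 N).cast_nonneg (α := ℝ)]⟩
end

section
/- For all integers n ≥ 2 and m ≥ 1, one has a_{n,m} ≤ a_{n+1,m+1}, i.e. the number of rooted trees with n vertices and m leaves is at most the number of rooted trees with n+1 vertices and m+1 leaves. -/
open SimpleGraph

/-!
Attaching a new leaf to the root sends a tree with `n ≥ 2` vertices and `m` leaves to one with
`n + 1` vertices and `m + 1` leaves. This operation is injective on isomorphism classes: an
isomorphism `e` between two extended trees need not match the two new leaves, but the new leaf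
and the image under `e` of the other one both hang from the root, so rerouting `e` around them
gives an isomorphism of the original trees.
-/

section Acyclic

variable {V : Type*} {G : SimpleGraph V} {v : V}

lemma notMem_support_of_isCycle_of_neighborSet_subsingleton (hv : (G.neighborSet v).Subsingleton)
    {u : V} {c : G.Walk u u} (hc : c.IsCycle) : v ∉ c.support := by
  classical
  intro hvc
  have hc' := hc.rotate hvc
  exact hc'.snd_ne_penultimate <|
    hv (Walk.adj_snd hc'.not_nil) (Walk.adj_penultimate hc'.not_nil).symm

lemma isAcyclic_of_induce_compl_singleton (hv : (G.neighborSet v).Subsingleton)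
    (h : (G.induce {v}ᶜ).IsAcyclic) : G.IsAcyclic := by
  intro u c hc
  have hvc : ∀ x ∈ c.support, x ∈ ({v}ᶜ : Set V) := fun x hx hxv ↦
    notMem_support_of_isCycle_of_neighborSet_subsingleton hv hc (hxv ▸ hx)
  refine h (c.induce _ hvc) (Walk.IsCycle.of_map (f := (Embedding.induce {v}ᶜ).toHom) ?_)
  rwa [Walk.map_induce]

end Acyclic

section NonrootLeaves

variable {V W : Type*}

/-- The vertices of degree one of `G` other than the root `r`. -/
def nonrootLeaves (G : SimpleGraph V) (r : V) : Set V :=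
  {v | (G.neighborSet v).ncard = 1 ∧ v ≠ r}

lemma ncard_nonrootLeaves_congr {G : SimpleGraph V} {H : SimpleGraph W} (e : G ≃g H) (r : V) :
    (nonrootLeaves G r).ncard = (nonrootLeaves H (e r)).ncard := by
  rw [← Set.ncard_image_of_injective _ e.injective]
  congr 1
  ext w
  obtain ⟨v, rfl⟩ := e.surjective w
  rw [e.injective.mem_set_image]
  simp only [nonrootLeaves, Set.mem_ofPred_eq, e.injective.ne_iff, ← e.image_neighborSet,
    Set.ncard_image_of_injective _ e.injective]

end NonrootLeaves

section AddPendant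

variable {V W : Type*}

/-- The graph obtained from `G` by attaching a new vertex, encoded as `none`, to the vertex `r`
by a single edge. -/
def addPendant (G : SimpleGraph V) (r : V) : SimpleGraph (Option V) :=
  G.map some ⊔ edge none (some r)

namespace addPendant

variable {G : SimpleGraph V} {H : SimpleGraph W} {r v w : V} {s : W}

@[simp]
lemma adj_some_some : (addPendant G r).Adj (some v) (some w) ↔ G.Adj v w := by
  simpa [addPendant, edge_adj, map_adj'] using Adj.ne

@[simp]
lemma adj_none_left {x : Option V} : (addPendant G r).Adj none x ↔ x = some r := by
  cases x <;> simp [addPendant, edge_adj, map_adj']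

@[simp]
lemma adj_none_right {x : Option V} : (addPendant G r).Adj x none ↔ x = some r := by
  rw [adj_comm, adj_none_left]

lemma neighborSet_none : (addPendant G r).neighborSet none = {some r} := by
  ext x
  simp

lemma neighborSet_some (hv : v ≠ r) :
    (addPendant G r).neighborSet (some v) = some '' G.neighborSet v := by
  ext x
  cases x <;> simp [hv]

lemma connected (hG : G.Connected) : (addPendant G r).Connected := by
  let inclusion : G →g addPendant G r := ⟨some, adj_some_some.2⟩
  rw [connected_iff_exists_forall_reachable]
  refine ⟨some r, fun x ↦ ?_⟩
  cases x with
  | none => exact (adj_none_right.2 rfl).reachable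
  | some v => exact (hG.preconnected r v).map inclusion

lemma isAcyclic (hG : G.IsAcyclic) : (addPendant G r).IsAcyclic := by
  refine isAcyclic_of_induce_compl_singleton (v := none) ?_ ?_
  · rw [neighborSet_none]
    exact Set.subsingleton_singleton
  · let deleteNone : (addPendant G r).induce {none}ᶜ →g G :=
      ⟨fun x ↦ x.1.get (Option.isSome_iff_ne_none.2 x.2), fun {x y} h ↦ by
        rw [← adj_some_some (r := r)]
        simpa using h⟩
    refine hG.comap deleteNone fun x y hxy ↦ Subtype.ext ?_
    exact Option.get_inj.1 hxy

lemma nonrootLeaves_eq :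
    nonrootLeaves (addPendant G r) (some r) = insert none (some '' nonrootLeaves G r) := by
  ext x
  cases x with
  | none => simp [nonrootLeaves, neighborSet_none]
  | some v =>
    by_cases hv : v = r
    · simp [nonrootLeaves, hv]
    · simp only [nonrootLeaves, Set.mem_ofPred_eq, neighborSet_some hv,
        Set.ncard_image_of_injective _ (Option.some_injective V)]
      simp [hv]

lemma ncard_nonrootLeaves (h : (nonrootLeaves G r).Finite) :
    (nonrootLeaves (addPendant G r) (some r)).ncard = (nonrootLeaves G r).ncard + 1 := by
  rw [nonrootLeaves_eq, Set.ncard_insert_of_notMem (by simp) (h.image some),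
    Set.ncard_image_of_injective _ (Option.some_injective V)]

/-- The isomorphism of the extended graphs induced by one matching the attachment vertices; it
matches the new vertices. -/
def mapIso (e : G ≃g H) (he : e r = s) : addPendant G r ≃g addPendant H s where
  toEquiv := e.toEquiv.optionCongr
  map_rel_iff' {x y} := by
    subst he
    cases x <;> cases y <;> simp [e.map_adj_iff]

/-
If `e` sends `some v` to `none`, then `some (e.toEquiv.removeNone v)` is `e none`, whose only
neighbor is `e (some r) = some s`, as it is for `none`.
-/
lemma adj_some_removeNone_iff (e : addPendant G r ≃g addPendant H s) (he : e (some r) = some s)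
    (v : V) (x : Option W) :
    (addPendant H s).Adj (some (e.toEquiv.removeNone v)) x ↔
      (addPendant H s).Adj (e (some v)) x := by
  cases hv : e (some v) with
  | some w => rw [Equiv.removeNone_some e.toEquiv ⟨w, hv⟩, ← hv]; rfl
  | none =>
    rw [Equiv.removeNone_none e.toEquiv hv]
    obtain ⟨y, rfl⟩ := e.surjective x
    calc (addPendant H s).Adj (e none) (e y)
      _ ↔ y = some r := by rw [e.map_adj_iff, adj_none_left]
      _ ↔ e y = some s := by rw [← he, e.injective.eq_iff]
      _ ↔ (addPendant H s).Adj none (e y) := adj_none_left.symm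

/-- The isomorphism of the original graphs obtained by deleting both new vertices; the vertex that
`e` sends to `none`, if it is not `none` itself, is sent to the image of `none` instead. -/
def isoOfIso (e : addPendant G r ≃g addPendant H s) (he : e (some r) = some s) : G ≃g H where
  toEquiv := e.toEquiv.removeNone
  map_rel_iff' {v w} := by
    rw [← adj_some_some (r := s), adj_some_removeNone_iff e he, adj_comm,
      adj_some_removeNone_iff e he, adj_comm, e.map_adj_iff, adj_some_some]

lemma isoOfIso_root (e : addPendant G r ≃g addPendant H s) (he : e (some r) = some s) :
    isoOfIso e he r = s :=
  Option.some_injective W <| (Equiv.removeNone_some e.toEquiv ⟨s, he⟩).trans he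

end addPendant

end AddPendant

namespace RTree

variable {n : ℕ}

instance finite : Finite (RTree n) := by
  refine Finite.of_injective (fun t : RTree n ↦ (t.adj, t.root)) ?_
  rintro ⟨G, _, _, r⟩ ⟨H, _, _, s⟩ h
  obtain ⟨rfl, rfl⟩ := Prod.mk.inj h
  rfl

lemma numLeaves_eq_ncard_nonrootLeaves (hn : n ≠ 1) (t : RTree n) :
    numLeaves t = (nonrootLeaves t.adj t.root).ncard := by
  simp only [numLeaves, IsLeafV, hn, false_or]
  rfl

/-- The rooted tree obtained by attaching a new leaf, the last vertex, to the root. -/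
def addLeaf (t : RTree n) : RTree (n + 1) where
  adj := (addPendant t.adj t.root).comap finSuccEquivLast
  connected := (Iso.comap finSuccEquivLast _).connected_iff.2 (addPendant.connected t.connected)
  acyclic := (Iso.comap finSuccEquivLast _).isAcyclic_iff.2 (addPendant.isAcyclic t.acyclic)
  root := t.root.castSucc

/-- The identification of `t.addLeaf` with its model on `Option (Fin n)`, through which the results
on `addPendant` apply to it. -/
def addLeafIso (t : RTree n) : t.addLeaf.adj ≃g addPendant t.adj t.root :=
  Iso.comap finSuccEquivLast _

lemma addLeafIso_root (t : RTree n) : t.addLeafIso t.addLeaf.root = some t.root :=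
  finSuccEquivLast_castSucc t.root

lemma numLeaves_addLeaf (hn : 2 ≤ n) (t : RTree n) : numLeaves t.addLeaf = numLeaves t + 1 := by
  rw [numLeaves_eq_ncard_nonrootLeaves (by lia), numLeaves_eq_ncard_nonrootLeaves (by lia),
    ncard_nonrootLeaves_congr t.addLeafIso, addLeafIso_root,
    addPendant.ncard_nonrootLeaves (Set.toFinite _)]

lemma addLeaf_rel_addLeaf_iff (t t' : RTree n) :
    treeSetoid (n + 1) t.addLeaf t'.addLeaf ↔ treeSetoid n t t' := by
  constructor
  · rintro ⟨e, he⟩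
    let f := (t.addLeafIso.symm.trans e).trans t'.addLeafIso
    have hf : f (some t.root) = some t'.root := by
      simp [f, ← addLeafIso_root, he]
    exact ⟨addPendant.isoOfIso f hf, addPendant.isoOfIso_root f hf⟩
  · rintro ⟨e, he⟩
    refine ⟨(t.addLeafIso.trans (addPendant.mapIso e he)).trans t'.addLeafIso.symm, ?_⟩
    have hmap : addPendant.mapIso e he (some t.root) = some t'.root := congrArg some he
    simp only [RelIso.trans_apply, addLeafIso_root, hmap]
    rw [← addLeafIso_root t', RelIso.symm_apply_apply]

end RTree

lemma aCount_le_of_rel_iff {n n' k k' : ℕ} (f : RTree n → RTree n')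
    (hleaves : ∀ t, numLeaves t = k → numLeaves (f t) = k')
    (hrel : ∀ t t', treeSetoid n' (f t) (f t') ↔ treeSetoid n t t') :
    aCount n k ≤ aCount n' k' := by
  let g : {t // numLeaves t = k} → {t // numLeaves t = k'} := Subtype.map f hleaves
  refine Nat.card_le_card_of_injective (Quotient.map' g fun t t' ↦ (hrel t.1 t'.1).2) ?_
  rintro ⟨t⟩ ⟨t'⟩ h
  have hg : Setoid.comap Subtype.val (treeSetoid n') (g t) (g t') := Quotient.exact' h
  exact Quotient.sound' ((hrel t.1 t'.1).1 hg)

/-- `a_{n,m} ≤ a_{n+1,m+1}` for `n ≥ 2`, `m ≥ 1`. -/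
theorem aCount_mono (n m : ℕ) (hn : 2 ≤ n) (hm : 1 ≤ m) :
    aCount n m ≤ aCount (n + 1) (m + 1) := by
  refine aCount_le_of_rel_iff RTree.addLeaf (fun t ht ↦ ?_) RTree.addLeaf_rel_addLeaf_iff
  rw [RTree.numLeaves_addLeaf hn, ht]
end
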